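/- Let R be a complete Noetherian local ring with maximal ideal 𝔪 and finite residue field, X an infinite set, ℱ a non-principal ultrafilter on X, and (M_α)_{α∈X}, (N_α)_{α∈X} bounded families of R-modules. Then there is a natural isomorphism of R-modules Hom_R(Patch_R((M_α)), Patch_R((N_α))) ≅ lim_n (∏_{α∈X} Hom_R(M_α/𝔪^n M_α, N_α/𝔪^n N_α))_ℱ. -/

import Mathlib

open Filter IsLocalRing

section Ultra

variable {X : Type*} (ℱ : Ultrafilter X) (A : Type*) [Ring A]

/-- The submodule of families vanishing on a set of the ultrafilter. -/
def ultraZero (M : X → Type*) [∀ α, AddCommGroup (M α)] [∀ α, Module A (M α)] :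
    Submodule A (∀ α, M α) where
  carrier := {x | ∀ᶠ α in (ℱ : Filter X), x α = 0}
  add_mem' := by
    intro a b ha hb
    filter_upwards [ha, hb] with α h1 h2
    simp [h1, h2]
  zero_mem' := Filter.Eventually.of_forall fun _ => rfl
  smul_mem' := by
    intro c x hx
    filter_upwards [hx] with α h
    simp [h]

lemma mem_ultraZero {M : X → Type*} [∀ α, AddCommGroup (M α)] [∀ α, Module A (M α)]
    {x : ∀ α, M α} :
    x ∈ ultraZero ℱ A M ↔ ∀ᶠ α in (ℱ : Filter X), x α = 0 := Iff.rfl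

/-- The ultraproduct of a family of `A`-modules along the ultrafilter `ℱ`. -/
abbrev Ultraproduct (M : X → Type*) [∀ α, AddCommGroup (M α)] [∀ α, Module A (M α)] :=
  (∀ α, M α) ⧸ ultraZero ℱ A M

/-- The map induced on ultraproducts by a family of linear maps. -/
def ultraMap {M N : X → Type*} [∀ α, AddCommGroup (M α)] [∀ α, Module A (M α)]
    [∀ α, AddCommGroup (N α)] [∀ α, Module A (N α)] (f : ∀ α, M α →ₗ[A] N α) :
    Ultraproduct ℱ A M →ₗ[A] Ultraproduct ℱ A N :=
  Submodule.mapQ _ _ (LinearMap.pi fun α => (f α).comp (LinearMap.proj α)) <| by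
    intro x hx
    simp only [Submodule.mem_comap]
    rw [mem_ultraZero]
    filter_upwards [hx] with α h
    simp [h]

lemma ultraMap_mk {M N : X → Type*} [∀ α, AddCommGroup (M α)] [∀ α, Module A (M α)]
    [∀ α, AddCommGroup (N α)] [∀ α, Module A (N α)] (f : ∀ α, M α →ₗ[A] N α)
    (x : ∀ α, M α) :
    ultraMap ℱ A f (Submodule.Quotient.mk x) =
      Submodule.Quotient.mk (fun α => f α (x α)) := by
  simp [ultraMap, Submodule.mapQ_apply]
  rfl

end Ultra

section SeqLimit

variable (R : Type*) [CommRing R]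

/-- The inverse limit of a sequence of modules, realised as a submodule of the product. -/
def seqLimit (P : ℕ → Type*) [∀ n, AddCommGroup (P n)] [∀ n, Module R (P n)]
    (g : ∀ n, P (n + 1) →ₗ[R] P n) : Submodule R (∀ n, P n) where
  carrier := {x | ∀ n, g n (x (n + 1)) = x n}
  add_mem' := by
    intro a b ha hb n
    simp [ha n, hb n]
  zero_mem' := by intro n; simp
  smul_mem' := by
    intro c x hx n
    simp [hx n]

end SeqLimit

section Patch

variable (R : Type*) [CommRing R] [IsLocalRing R]

/-- The submodule 𝔪ⁿ•M of a module M. -/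
abbrev mPow (n : ℕ) (M : Type*) [AddCommGroup M] [Module R M] : Submodule R M :=
  (maximalIdeal R ^ n) • (⊤ : Submodule R M)

/-- The quotient M/𝔪ⁿM. -/
abbrev ModQuot (n : ℕ) (M : Type*) [AddCommGroup M] [Module R M] :=
  M ⧸ mPow R n M

lemma mPow_succ_le (n : ℕ) (M : Type*) [AddCommGroup M] [Module R M] :
    mPow R (n + 1) M ≤ mPow R n M :=
  Submodule.smul_mono_left (Ideal.pow_le_pow_right n.le_succ)

/-- The reduction map M/𝔪ⁿ⁺¹M → M/𝔪ⁿM. -/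
def quotTrans (n : ℕ) (M : Type*) [AddCommGroup M] [Module R M] :
    ModQuot R (n + 1) M →ₗ[R] ModQuot R n M :=
  Submodule.mapQ _ _ LinearMap.id <| by
    intro x hx
    simpa using mPow_succ_le R n M hx

lemma quotTrans_mk (n : ℕ) (M : Type*) [AddCommGroup M] [Module R M] (x : M) :
    quotTrans R n M (Submodule.Quotient.mk x) = Submodule.Quotient.mk x := by
  simp [quotTrans, Submodule.mapQ_apply]

variable {X : Type*} (ℱ : Ultrafilter X)

/-- The n-th level of the patching construction: the ultraproduct of the quotients M α/𝔪ⁿ. -/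
abbrev UP (M : X → Type*) [∀ α, AddCommGroup (M α)] [∀ α, Module R (M α)] (n : ℕ) :=
  Ultraproduct ℱ R (fun α => ModQuot R n (M α))

/-- The transition maps between the levels of the patching construction. -/
def upTrans (M : X → Type*) [∀ α, AddCommGroup (M α)] [∀ α, Module R (M α)] (n : ℕ) :
    UP R ℱ M (n + 1) →ₗ[R] UP R ℱ M n :=
  ultraMap ℱ R (fun α => quotTrans R n (M α))

/-- The patching module of a family of R-modules: the inverse limit over n of the
ultraproducts of the quotients M α/𝔪ⁿ. -/
def PatchS (M : X → Type*) [∀ α, AddCommGroup (M α)] [∀ α, Module R (M α)] :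
    Submodule R (∀ n, UP R ℱ M n) :=
  seqLimit R (fun n => UP R ℱ M n) (fun n => upTrans R ℱ M n)

lemma mem_PatchS {M : X → Type*} [∀ α, AddCommGroup (M α)] [∀ α, Module R (M α)]
    {x : ∀ n, UP R ℱ M n} :
    x ∈ PatchS R ℱ M ↔ ∀ n, upTrans R ℱ M n (x (n + 1)) = x n := Iff.rfl

-- functoriality of ModQuot
lemma mapQ_cond {M N : Type*} [AddCommGroup M] [Module R M] [AddCommGroup N] [Module R N]
    (f : M →ₗ[R] N) (n : ℕ) : mPow R n M ≤ (mPow R n N).comap f := by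
  rw [← Submodule.map_le_iff_le_comap, Submodule.map_smul'']
  exact Submodule.smul_mono le_rfl le_top

/-- The map induced by f : M →ₗ N on the quotients modulo 𝔪ⁿ. -/
def modQuotMap (n : ℕ) {M N : Type*} [AddCommGroup M] [Module R M] [AddCommGroup N]
    [Module R N] (f : M →ₗ[R] N) : ModQuot R n M →ₗ[R] ModQuot R n N :=
  Submodule.mapQ _ _ f (mapQ_cond R f n)

lemma modQuotMap_mk (n : ℕ) {M N : Type*} [AddCommGroup M] [Module R M] [AddCommGroup N]
    [Module R N] (f : M →ₗ[R] N) (x : M) :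
    modQuotMap R n f (Submodule.Quotient.mk x) = Submodule.Quotient.mk (f x) := by
  simp [modQuotMap, Submodule.mapQ_apply]

lemma quotTrans_modQuotMap {M N : Type*} [AddCommGroup M] [Module R M] [AddCommGroup N]
    [Module R N] (f : M →ₗ[R] N) (n : ℕ) (q : ModQuot R (n + 1) M) :
    quotTrans R n N (modQuotMap R (n + 1) f q) = modQuotMap R n f (quotTrans R n M q) := by
  obtain ⟨z, rfl⟩ := Submodule.Quotient.mk_surjective _ q
  rw [modQuotMap_mk, quotTrans_mk, quotTrans_mk, modQuotMap_mk]

lemma level_compat {M N : X → Type*} [∀ α, AddCommGroup (M α)] [∀ α, Module R (M α)]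
    [∀ α, AddCommGroup (N α)] [∀ α, Module R (N α)] (f : ∀ α, M α →ₗ[R] N α) (n : ℕ)
    (u : UP R ℱ M (n + 1)) :
    upTrans R ℱ N n (ultraMap ℱ R (fun α => modQuotMap R (n + 1) (f α)) u) =
      ultraMap ℱ R (fun α => modQuotMap R n (f α)) (upTrans R ℱ M n u) := by
  obtain ⟨y, rfl⟩ := Submodule.Quotient.mk_surjective _ u
  simp only [upTrans]
  rw [ultraMap_mk, ultraMap_mk, ultraMap_mk, ultraMap_mk]
  exact congrArg _ (funext fun α => quotTrans_modQuotMap R (f α) n (y α))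

/-- The map induced on patching modules by a family of linear maps. -/
def patchMap {M N : X → Type*} [∀ α, AddCommGroup (M α)] [∀ α, Module R (M α)]
    [∀ α, AddCommGroup (N α)] [∀ α, Module R (N α)] (f : ∀ α, M α →ₗ[R] N α) :
    ↥(PatchS R ℱ M) →ₗ[R] ↥(PatchS R ℱ N) :=
  LinearMap.codRestrict _
    ((LinearMap.pi fun n =>
        (ultraMap ℱ R fun α => modQuotMap R n (f α)).comp (LinearMap.proj n)).comp
      (PatchS R ℱ M).subtype)
    (by
      intro x
      rw [mem_PatchS]
      intro n
      simp only [LinearMap.comp_apply, LinearMap.pi_apply, LinearMap.proj_apply,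
        Submodule.subtype_apply]
      rw [level_compat, x.2 n])

end Patch

section HomTrans

variable (R : Type*) [CommRing R] [IsLocalRing R]

lemma mPow_le_ker_quotTrans (n : ℕ) (N : Type*) [AddCommGroup N] [Module R N] :
    mPow R n (ModQuot R (n + 1) N) ≤ LinearMap.ker (quotTrans R n N) := by
  have h : mPow R n (ModQuot R (n + 1) N)
      = Submodule.map (mPow R (n + 1) N).mkQ (mPow R n N) := by
    rw [Submodule.map_smul'', Submodule.map_top, Submodule.range_mkQ]
  rw [h]
  rintro _ ⟨y, hy, rfl⟩
  rw [LinearMap.mem_ker, Submodule.mkQ_apply, quotTrans_mk, Submodule.Quotient.mk_eq_zero]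
  exact hy

variable {M N : Type*} [AddCommGroup M] [Module R M] [AddCommGroup N] [Module R N]

lemma homTrans_ker (n : ℕ) (φ : ModQuot R (n + 1) M →ₗ[R] ModQuot R (n + 1) N) :
    mPow R n M ≤ LinearMap.ker ((quotTrans R n N) ∘ₗ (φ ∘ₗ (mPow R (n + 1) M).mkQ)) := by
  intro x hx
  rw [LinearMap.mem_ker, LinearMap.comp_apply, LinearMap.comp_apply]
  have h1 : (mPow R (n + 1) M).mkQ x ∈ mPow R n (ModQuot R (n + 1) M) := by
    have h2 : ((mPow R (n + 1) M).mkQ) x ∈ Submodule.map (mPow R (n + 1) M).mkQ (mPow R n M) :=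
      Submodule.mem_map_of_mem hx
    rwa [Submodule.map_smul'', Submodule.map_top, Submodule.range_mkQ] at h2
  have h3 : φ ((mPow R (n + 1) M).mkQ x) ∈ mPow R n (ModQuot R (n + 1) N) := by
    have h4 := Submodule.mem_map_of_mem (f := φ) h1
    rw [Submodule.map_smul''] at h4
    exact Submodule.smul_mono le_rfl le_top h4
  have h5 := mPow_le_ker_quotTrans R n N h3
  rwa [LinearMap.mem_ker] at h5

/-- The transition map between the modules of homomorphisms of successive quotients. -/
def homTrans (n : ℕ) :
    (ModQuot R (n + 1) M →ₗ[R] ModQuot R (n + 1) N) →ₗ[R]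
      (ModQuot R n M →ₗ[R] ModQuot R n N) where
  toFun φ := Submodule.liftQ _ ((quotTrans R n N) ∘ₗ (φ ∘ₗ (mPow R (n + 1) M).mkQ))
    (homTrans_ker R n φ)
  map_add' φ ψ := by
    refine LinearMap.ext fun q => ?_
    obtain ⟨x, rfl⟩ := Submodule.Quotient.mk_surjective _ q
    simp [Submodule.liftQ_apply]
  map_smul' c φ := by
    refine LinearMap.ext fun q => ?_
    obtain ⟨x, rfl⟩ := Submodule.Quotient.mk_surjective _ q
    simp [Submodule.liftQ_apply]

end HomTrans

/-
Two finiteness statements give the isomorphism. Since `𝔪 ^ n` is finitely generated, the kernel of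
the projection of a patching module to its `n`-th level is `𝔪 ^ n` times the patching module, so a
homomorphism of patching modules descends to every level. On the `n`-th level, all the modules
`M α / 𝔪 ^ n` are quotients of one finite, finitely presented module `R ^ s / 𝔪 ^ n`; finite
presentation lets homomorphisms into an ultraproduct lift to the factors, and finiteness makes a
condition on all elements hold simultaneously on a set of `ℱ`, so `Hom` commutes
with ultraproducts.
-/

section UltraHom

variable {X : Type*} (ℱ : Ultrafilter X) {A : Type*}

section Ring

variable [Ring A] {P : Type*} [AddCommGroup P] [Module A P] {M N : X → Type*}
  [∀ α, AddCommGroup (M α)] [∀ α, Module A (M α)] [∀ α, AddCommGroup (N α)] [∀ α, Module A (N α)]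

/-- The map `x ↦ [(p α x)]` into an ultraproduct induced by linear maps out of a fixed module. -/
def ultraPi (p : ∀ α, P →ₗ[A] M α) : P →ₗ[A] Ultraproduct ℱ A M :=
  (ultraZero ℱ A M).mkQ ∘ₗ LinearMap.pi p

lemma ultraPi_eq_zero_iff (p : ∀ α, P →ₗ[A] M α) (x : P) :
    ultraPi ℱ p x = 0 ↔ ∀ᶠ α in (ℱ : Filter X), p α x = 0 :=
  Submodule.Quotient.mk_eq_zero _

lemma ultraPi_congr {p q : ∀ α, P →ₗ[A] M α} (h : ∀ᶠ α in (ℱ : Filter X), p α = q α) :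
    ultraPi ℱ p = ultraPi ℱ q := by
  refine LinearMap.ext fun x => (Submodule.Quotient.eq _).2 ?_
  filter_upwards [h] with α hα
  exact sub_eq_zero.2 (LinearMap.congr_fun hα x)

lemma eventually_le_ker_of_le_ker_ultraPi {p : ∀ α, P →ₗ[A] M α} {K : Submodule A P}
    (hK : K.FG) (h : K ≤ LinearMap.ker (ultraPi ℱ p)) :
    ∀ᶠ α in (ℱ : Filter X), K ≤ LinearMap.ker (p α) := by
  obtain ⟨S, rfl⟩ := hK
  have hS : ∀ᶠ α in (ℱ : Filter X), ∀ x ∈ S, p α x = 0 :=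
    (eventually_all_finset S).2 fun x hx =>
      (ultraPi_eq_zero_iff ℱ p x).1 (h (Submodule.subset_span hx))
  filter_upwards [hS] with α hα using Submodule.span_le.2 hα

lemma eventually_ker_le_ker_of_finite [Finite P] {p : ∀ α, P →ₗ[A] M α} {q : ∀ α, P →ₗ[A] N α}
    (h : LinearMap.ker (ultraPi ℱ p) ≤ LinearMap.ker (ultraPi ℱ q)) :
    ∀ᶠ α in (ℱ : Filter X), LinearMap.ker (p α) ≤ LinearMap.ker (q α) :=
  eventually_all.2 fun x => Ultrafilter.eventually_imp.2 fun hx =>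
    (ultraPi_eq_zero_iff ℱ q x).1 (h ((ultraPi_eq_zero_iff ℱ p x).2 hx))

lemma ultraPi_surjective [Finite P] {p : ∀ α, P →ₗ[A] M α}
    (hp : ∀ α, Function.Surjective (p α)) : Function.Surjective (ultraPi ℱ p) := by
  intro u
  obtain ⟨x, rfl⟩ := Submodule.Quotient.mk_surjective _ u
  obtain ⟨z, hz⟩ := Ultrafilter.eventually_exists_iff.1 <|
    Eventually.of_forall (f := (ℱ : Filter X)) fun α => hp α (x α)
  refine ⟨z, (Submodule.Quotient.eq _).2 ?_⟩
  filter_upwards [hz] with α hα using sub_eq_zero.2 hα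

lemma exists_comp_eq_of_ker_le_ker {Q S : Type*} [AddCommGroup Q] [Module A Q]
    [AddCommGroup S] [Module A S] {p : P →ₗ[A] Q} (hp : Function.Surjective p)
    {q : P →ₗ[A] S} (h : LinearMap.ker p ≤ LinearMap.ker q) : ∃ f : Q →ₗ[A] S, f ∘ₗ p = q := by
  refine ⟨(LinearMap.ker p).liftQ q h ∘ₗ (p.quotKerEquivOfSurjective hp).symm, ?_⟩
  ext x
  have hx : (p.quotKerEquivOfSurjective hp).symm (p x) = Submodule.Quotient.mk x :=
    (LinearEquiv.symm_apply_eq _).2 rfl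
  simp [hx]

lemma exists_eventually_comp_eq {p : ∀ α, P →ₗ[A] M α} (hp : ∀ α, Function.Surjective (p α))
    {q : ∀ α, P →ₗ[A] N α}
    (h : ∀ᶠ α in (ℱ : Filter X), LinearMap.ker (p α) ≤ LinearMap.ker (q α)) :
    ∃ f : ∀ α, M α →ₗ[A] N α, ∀ᶠ α in (ℱ : Filter X), f α ∘ₗ p α = q α :=
  skolem.1 <| h.mono fun α hα => exists_comp_eq_of_ker_le_ker (hp α) hα

lemma exists_ultraPi_eq [Module.FinitePresentation A P] (φ : P →ₗ[A] Ultraproduct ℱ A N) :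
    ∃ q : ∀ α, P →ₗ[A] N α, ultraPi ℱ q = φ := by
  obtain ⟨n, π, hπ⟩ := Module.Finite.exists_fin' A P
  obtain ⟨ψ, hψ⟩ := Module.projective_lifting_property (ultraZero ℱ A N).mkQ (φ ∘ₗ π)
    (Submodule.mkQ_surjective _)
  have hker : LinearMap.ker π ≤ LinearMap.ker (ultraPi ℱ fun α => LinearMap.proj α ∘ₗ ψ) :=
    (LinearMap.ker_le_ker_comp π φ).trans_eq (congrArg LinearMap.ker hψ.symm)
  obtain ⟨q, hq⟩ := exists_eventually_comp_eq ℱ (fun _ => hπ) <|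
    eventually_le_ker_of_le_ker_ultraPi ℱ (Module.FinitePresentation.fg_ker π hπ) hker
  refine ⟨q, (LinearMap.cancel_right hπ).1 ?_⟩
  exact (ultraPi_congr ℱ hq).trans hψ

end Ring

variable [CommRing A] {P : Type*} [AddCommGroup P] [Module A P] {M N : X → Type*}
  [∀ α, AddCommGroup (M α)] [∀ α, Module A (M α)] [∀ α, AddCommGroup (N α)] [∀ α, Module A (N α)]

/-- The natural map from the ultraproduct of the `Hom`s to the `Hom` of the ultraproducts, sending
the class of a family `f` to `ultraMap f`. -/
def ultraHom : Ultraproduct ℱ A (fun α => M α →ₗ[A] N α) →ₗ[A]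
    Ultraproduct ℱ A M →ₗ[A] Ultraproduct ℱ A N :=
  Submodule.liftQ _
    { toFun := fun f => ultraMap ℱ A f
      map_add' := fun f g => by ext x; exact ultraMap_mk ℱ A (f + g) x
      map_smul' := fun c f => by ext x; exact ultraMap_mk ℱ A (c • f) x } <| by
    intro f hf
    ext x
    refine (Submodule.Quotient.mk_eq_zero _).2 ?_
    filter_upwards [hf] with α hα using LinearMap.congr_fun hα (x α)

lemma ultraHom_mk (f : ∀ α, M α →ₗ[A] N α) (x : ∀ α, M α) :
    ultraHom ℱ (Submodule.Quotient.mk f) (Submodule.Quotient.mk x) =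
      Submodule.Quotient.mk (fun α => f α (x α)) :=
  ultraMap_mk ℱ A f x

lemma ultraHom_mk_comp_ultraPi (f : ∀ α, M α →ₗ[A] N α) (p : ∀ α, P →ₗ[A] M α) :
    ultraHom ℱ (Submodule.Quotient.mk f) ∘ₗ ultraPi ℱ p = ultraPi ℱ fun α => f α ∘ₗ p α :=
  LinearMap.ext fun x => ultraHom_mk ℱ f fun α => p α x

lemma ultraHom_injective [Module.Finite A P] {p : ∀ α, P →ₗ[A] M α}
    (hp : ∀ α, Function.Surjective (p α)) :
    Function.Injective (ultraHom ℱ (A := A) (M := M) (N := N)) := by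
  rw [injective_iff_map_eq_zero]
  intro u hu
  obtain ⟨f, rfl⟩ := Submodule.Quotient.mk_surjective _ u
  have hfp : ultraPi ℱ (fun α => f α ∘ₗ p α) = 0 := by
    rw [← ultraHom_mk_comp_ultraPi, hu, LinearMap.zero_comp]
  have hker := eventually_le_ker_of_le_ker_ultraPi ℱ Module.Finite.fg_top
    (LinearMap.ker_eq_top.2 hfp).ge
  refine (Submodule.Quotient.mk_eq_zero _).2 ?_
  filter_upwards [hker] with α hα
  have hcomp : f α ∘ₗ p α = 0 ∘ₗ p α := LinearMap.ker_eq_top.1 (top_le_iff.1 hα)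
  exact (LinearMap.cancel_right (hp α)).1 hcomp

lemma ultraHom_surjective [Finite P] [Module.FinitePresentation A P] {p : ∀ α, P →ₗ[A] M α}
    (hp : ∀ α, Function.Surjective (p α)) :
    Function.Surjective (ultraHom ℱ (A := A) (M := M) (N := N)) := by
  intro g
  obtain ⟨q, hq⟩ := exists_ultraPi_eq ℱ (g ∘ₗ ultraPi ℱ p)
  have hker : LinearMap.ker (ultraPi ℱ p) ≤ LinearMap.ker (ultraPi ℱ q) :=
    hq ▸ LinearMap.ker_le_ker_comp _ g
  obtain ⟨f, hf⟩ := exists_eventually_comp_eq ℱ hp (eventually_ker_le_ker_of_finite ℱ hker)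
  refine ⟨Submodule.Quotient.mk f, (LinearMap.cancel_right (ultraPi_surjective ℱ hp)).1 ?_⟩
  rw [ultraHom_mk_comp_ultraPi, ultraPi_congr ℱ hf, hq]

end UltraHom

lemma exists_sum_smul_of_mem_span_smul {R M : Type*} [CommRing R] [AddCommGroup M] [Module R M]
    {S : Finset R} {P : Submodule R M} {x : M} (hx : x ∈ Ideal.span (S : Set R) • P) :
    ∃ z : R → M, (∀ r, z r ∈ P) ∧ x = ∑ r ∈ S, r • z r := by
  rw [Submodule.span_smul_eq, Submodule.mem_set_smul] at hx
  obtain ⟨c, hcS, rfl⟩ := hx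
  refine ⟨fun r => c r, fun r => (c r).2, ?_⟩
  simp [Finsupp.sum_of_support_subset c hcS]

section ModQuot

variable {R : Type*} [CommRing R] [IsLocalRing R]
  {M N : Type*} [AddCommGroup M] [Module R M] [AddCommGroup N] [Module R N]

lemma smul_modQuot_eq_zero {n : ℕ} {r : R} (hr : r ∈ maximalIdeal R ^ n) (q : ModQuot R n M) :
    r • q = 0 := by
  obtain ⟨x, rfl⟩ := Submodule.Quotient.mk_surjective _ q
  exact (Submodule.Quotient.mk_eq_zero _).2 (Submodule.smul_mem_smul hr trivial)

lemma modQuotMap_surjective (n : ℕ) {f : M →ₗ[R] N} (hf : Function.Surjective f) :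
    Function.Surjective (modQuotMap R n f) :=
  .of_comp (g := (mPow R n M).mkQ) ((Submodule.mkQ_surjective _).comp hf)

lemma homTrans_quotTrans (n : ℕ) (φ : ModQuot R (n + 1) M →ₗ[R] ModQuot R (n + 1) N)
    (q : ModQuot R (n + 1) M) :
    homTrans R n φ (quotTrans R n M q) = quotTrans R n N (φ q) := by
  obtain ⟨x, rfl⟩ := Submodule.Quotient.mk_surjective _ q
  rw [quotTrans_mk]
  rfl

lemma finite_modQuot (hm : (maximalIdeal R).FG) [Finite (ResidueField R)] [Module.Finite R M]
    (n : ℕ) : Finite (ModQuot R n M) := by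
  have : Finite (R ⧸ maximalIdeal R) := ‹Finite (ResidueField R)›
  have : Finite (R ⧸ maximalIdeal R ^ n) := Ideal.finite_quotient_pow hm n
  have : Module.Finite (R ⧸ maximalIdeal R ^ n) (ModQuot R n M) := .of_restrictScalars_finite R _ _
  exact Module.finite_of_finite (R ⧸ maximalIdeal R ^ n)

lemma finitePresentation_modQuot (hm : (maximalIdeal R).FG) [Module.FinitePresentation R M]
    (n : ℕ) : Module.FinitePresentation R (ModQuot R n M) := by
  refine Module.finitePresentation_of_surjective _ (mPow R n M).mkQ_surjective ?_
  rw [Submodule.ker_mkQ]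
  exact Submodule.FG.smul (Ideal.FG.pow hm) Module.Finite.fg_top

end ModQuot

section PatchEval

variable (R : Type*) [CommRing R] [IsLocalRing R] {X : Type*} (ℱ : Ultrafilter X)
  (M : X → Type*) [∀ α, AddCommGroup (M α)] [∀ α, Module R (M α)]

/-- The projection of the patching module to its `n`-th level. -/
def patchEval (n : ℕ) : PatchS R ℱ M →ₗ[R] UP R ℱ M n :=
  LinearMap.proj n ∘ₗ (PatchS R ℱ M).subtype

/-- The natural map from the product of a family of modules to its patching module. -/
def patchOf : (∀ α, M α) →ₗ[R] PatchS R ℱ M where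
  toFun y := ⟨fun _ => Submodule.Quotient.mk fun α => Submodule.Quotient.mk (y α), fun n =>
    (ultraMap_mk ..).trans (congrArg _ (funext fun α => quotTrans_mk R n (M α) (y α)))⟩
  map_add' _ _ := rfl
  map_smul' _ _ := rfl

variable {R ℱ M}

lemma patchEval_patchOf_eq_zero_iff {y : ∀ α, M α} {n : ℕ} :
    patchEval R ℱ M n (patchOf R ℱ M y) = 0 ↔ ∀ᶠ α in (ℱ : Filter X), y α ∈ mPow R n (M α) := by
  refine (Submodule.Quotient.mk_eq_zero _).trans (eventually_congr (.of_forall fun α => ?_))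
  exact Submodule.Quotient.mk_eq_zero _

lemma patchOf_congr {y z : ∀ α, M α} (h : ∀ᶠ α in (ℱ : Filter X), y α = z α) :
    patchOf R ℱ M y = patchOf R ℱ M z := by
  refine Subtype.ext (funext fun n => (Submodule.Quotient.eq _).2 ?_)
  filter_upwards [h] with α hα
  exact sub_eq_zero.2 (congrArg (mPow R n (M α)).mkQ hα)

lemma exists_patchEval_patchOf_eq {n : ℕ} (u : UP R ℱ M n) :
    ∃ y, patchEval R ℱ M n (patchOf R ℱ M y) = u := by
  obtain ⟨v, rfl⟩ := Submodule.Quotient.mk_surjective _ u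
  choose y hy using fun α => Submodule.Quotient.mk_surjective _ (v α)
  exact ⟨y, congrArg _ (funext hy)⟩

variable (R ℱ M) in
lemma patchEval_surjective (n : ℕ) : Function.Surjective (patchEval R ℱ M n) := fun u =>
  let ⟨y, hy⟩ := exists_patchEval_patchOf_eq u
  ⟨patchOf R ℱ M y, hy⟩

lemma patchEval_eq_of_le {x y : PatchS R ℱ M} {m n : ℕ} (hmn : m ≤ n)
    (h : patchEval R ℱ M n x = patchEval R ℱ M n y) :
    patchEval R ℱ M m x = patchEval R ℱ M m y := by
  induction n, hmn using Nat.le_induction with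
  | base => exact h
  | succ n _ ih => exact ih ((x.2 n).symm.trans ((congrArg (upTrans R ℱ M n) h).trans (y.2 n)))

lemma exists_patchEval_eq_sum_range (w : ℕ → PatchS R ℱ M)
    (hw : ∀ i, patchEval R ℱ M i (w i) = 0) :
    ∃ z : PatchS R ℱ M, ∀ k,
      patchEval R ℱ M k z = ∑ i ∈ Finset.range k, patchEval R ℱ M k (w i) := by
  refine ⟨⟨fun k => ∑ i ∈ Finset.range k, patchEval R ℱ M k (w i), fun k => ?_⟩, fun _ => rfl⟩
  calc upTrans R ℱ M k (∑ i ∈ Finset.range (k + 1), patchEval R ℱ M (k + 1) (w i))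
      = ∑ i ∈ Finset.range (k + 1), patchEval R ℱ M k (w i) := by
        rw [map_sum]
        exact Finset.sum_congr rfl fun i _ => (w i).2 k
    _ = ∑ i ∈ Finset.range k, patchEval R ℱ M k (w i) := by
        rw [Finset.sum_range_succ, hw, add_zero]

lemma mPow_le_ker_patchEval (n : ℕ) :
    mPow R n (PatchS R ℱ M) ≤ LinearMap.ker (patchEval R ℱ M n) := by
  refine Submodule.smul_le.2 fun r hr x _ => ?_
  obtain ⟨y, hy⟩ := Submodule.Quotient.mk_surjective _ (patchEval R ℱ M n x)
  rw [LinearMap.mem_ker, map_smul, ← hy]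
  exact congrArg _ (funext fun α => smul_modQuot_eq_zero hr (y α))

lemma exists_patchOf_eq_sum_smul {S : Finset R} {n k : ℕ}
    (hS : Ideal.span (S : Set R) = maximalIdeal R ^ n) {y : ∀ α, M α}
    (hy : patchEval R ℱ M (n + k) (patchOf R ℱ M y) = 0) :
    ∃ w : R → PatchS R ℱ M, (∀ r, patchEval R ℱ M k (w r) = 0) ∧
      patchOf R ℱ M y = ∑ r ∈ S, r • w r := by
  have hmem : ∀ᶠ α in (ℱ : Filter X), ∃ z : R → M α,
      (∀ r, z r ∈ mPow R k (M α)) ∧ y α = ∑ r ∈ S, r • z r := by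
    filter_upwards [patchEval_patchOf_eq_zero_iff.1 hy] with α hα
    rw [mPow, pow_add, Submodule.mul_smul, ← hS] at hα
    exact exists_sum_smul_of_mem_span_smul hα
  obtain ⟨z, hz⟩ := skolem.1 hmem
  refine ⟨fun r => patchOf R ℱ M fun α => z α r, fun r => ?_, ?_⟩
  · exact patchEval_patchOf_eq_zero_iff.2 (hz.mono fun α hα => hα.1 r)
  · simp only [← map_smul, ← map_sum]
    refine patchOf_congr (hz.mono fun α hα => ?_)
    simpa only [Finset.sum_apply, Pi.smul_apply] using hα.2

lemma exists_patchOf_approx {n : ℕ} {x : PatchS R ℱ M} (hx : patchEval R ℱ M n x = 0) :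
    ∃ y : ℕ → ∀ α, M α, y 0 = 0 ∧
      ∀ k, patchEval R ℱ M (n + k) (patchOf R ℱ M (y k)) = patchEval R ℱ M (n + k) x := by
  choose y hy using fun k => exists_patchEval_patchOf_eq (patchEval R ℱ M (n + k) x)
  refine ⟨Function.update y 0 0, Function.update_self .., fun k => ?_⟩
  rcases eq_or_ne k 0 with rfl | hk
  · rw [Function.update_self, map_zero, map_zero]
    exact hx.symm
  · rw [Function.update_of_ne hk, hy]

/- Choose `y k` representing `x` modulo `𝔪 ^ (n + k)`, with `y 0 = 0`. If `S` generates `𝔪 ^ n`,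
then each difference `y (k + 1) - y k` is `∑ r ∈ S, r • w k r` with `w k r` vanishing modulo
`𝔪 ^ k`, so the series `∑ k, w k r` converge and `x = ∑ r ∈ S, r • ∑ k, w k r`. -/
lemma ker_patchEval_le_mPow (hm : (maximalIdeal R).FG) (n : ℕ) :
    LinearMap.ker (patchEval R ℱ M n) ≤ mPow R n (PatchS R ℱ M) := by
  intro x hx
  obtain ⟨S, hS⟩ := hm.pow (n := n)
  obtain ⟨y, hy0, hy⟩ := exists_patchOf_approx hx
  have hdiff (k : ℕ) : patchEval R ℱ M (n + k) (patchOf R ℱ M (y (k + 1) - y k)) = 0 := by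
    rw [map_sub, map_sub, hy k, sub_eq_zero]
    exact patchEval_eq_of_le (Nat.le_succ (n + k)) (hy (k + 1))
  choose w hw hyw using fun k => exists_patchOf_eq_sum_smul hS (hdiff k)
  choose z hz using fun r => exists_patchEval_eq_sum_range (fun k => w k r) fun k => hw k r
  have hxz : x = ∑ r ∈ S, r • z r := by
    refine Subtype.ext (funext fun k => ?_)
    change patchEval R ℱ M k x = patchEval R ℱ M k (∑ r ∈ S, r • z r)
    calc patchEval R ℱ M k x
        = patchEval R ℱ M k (patchOf R ℱ M (y k)) :=
          (patchEval_eq_of_le (Nat.le_add_left k n) (hy k)).symm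
      _ = patchEval R ℱ M k (∑ i ∈ Finset.range k, patchOf R ℱ M (y (i + 1) - y i)) := by
          rw [← map_sum, Finset.sum_range_sub, hy0, sub_zero]
      _ = ∑ r ∈ S, r • ∑ i ∈ Finset.range k, patchEval R ℱ M k (w i r) := by
          simp only [hyw, map_sum, map_smul, Finset.smul_sum]
          exact Finset.sum_comm
      _ = ∑ r ∈ S, r • patchEval R ℱ M k (z r) :=
          Finset.sum_congr rfl fun r _ => congrArg (r • ·) (hz r k).symm
      _ = patchEval R ℱ M k (∑ r ∈ S, r • z r) := by simp only [map_sum, map_smul]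
  rw [hxz]
  refine Submodule.sum_mem _ fun r hr => Submodule.smul_mem_smul ?_ trivial
  exact hS ▸ Ideal.subset_span hr

end PatchEval

section PatchHom

variable {R : Type*} [CommRing R] [IsLocalRing R] {X : Type*} (ℱ : Ultrafilter X)
  {M N : X → Type*} [∀ α, AddCommGroup (M α)] [∀ α, Module R (M α)]
  [∀ α, AddCommGroup (N α)] [∀ α, Module R (N α)]

lemma ultraHom_upTrans (n : ℕ)
    (φ : Ultraproduct ℱ R fun α => ModQuot R (n + 1) (M α) →ₗ[R] ModQuot R (n + 1) (N α))
    (u : UP R ℱ M (n + 1)) :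
    ultraHom ℱ (ultraMap ℱ R (fun _ => homTrans R n) φ) (upTrans R ℱ M n u) =
      upTrans R ℱ N n (ultraHom ℱ φ u) := by
  obtain ⟨f, rfl⟩ := Submodule.Quotient.mk_surjective _ φ
  obtain ⟨x, rfl⟩ := Submodule.Quotient.mk_surjective _ u
  rw [upTrans, upTrans, ultraMap_mk, ultraMap_mk, ultraHom_mk, ultraHom_mk, ultraMap_mk]
  exact congrArg _ (funext fun α => homTrans_quotTrans n (f α) (x α))

lemma ultraHom_modQuot_bijective (hm : (maximalIdeal R).FG) [Finite (ResidueField R)]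
    {P : Type*} [AddCommGroup P] [Module R P] [Module.FinitePresentation R P]
    {f : ∀ α, P →ₗ[R] M α} (hf : ∀ α, Function.Surjective (f α)) (n : ℕ) :
    Function.Bijective
      (ultraHom ℱ (A := R) (M := fun α => ModQuot R n (M α)) (N := fun α => ModQuot R n (N α))) :=
  have := finite_modQuot (M := P) hm n
  have := finitePresentation_modQuot (M := P) hm n
  have hfn (α : X) := modQuotMap_surjective n (hf α)
  ⟨ultraHom_injective ℱ hfn, ultraHom_surjective ℱ hfn⟩

lemma exists_comp_patchEval_eq (hm : (maximalIdeal R).FG)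
    (g : PatchS R ℱ M →ₗ[R] PatchS R ℱ N) (n : ℕ) :
    ∃ h : UP R ℱ M n →ₗ[R] UP R ℱ N n, h ∘ₗ patchEval R ℱ M n = patchEval R ℱ N n ∘ₗ g := by
  have hker : LinearMap.ker (patchEval R ℱ M n) ≤ LinearMap.ker (patchEval R ℱ N n ∘ₗ g) :=
    calc LinearMap.ker (patchEval R ℱ M n)
        ≤ mPow R n (PatchS R ℱ M) := ker_patchEval_le_mPow hm n
      _ ≤ (mPow R n (PatchS R ℱ N)).comap g :=
          mapQ_cond R (M := PatchS R ℱ M) (N := PatchS R ℱ N) g n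
      _ ≤ (LinearMap.ker (patchEval R ℱ N n)).comap g :=
          Submodule.comap_mono (mPow_le_ker_patchEval n)
  exact exists_comp_eq_of_ker_le_ker (P := PatchS R ℱ M) (patchEval_surjective R ℱ M n) hker

variable (R M N) in
/-- The limit over `n` of the ultraproducts of the modules `Hom(M α/𝔪ⁿ, N α/𝔪ⁿ)`. -/
abbrev HomLimit :=
  seqLimit R (fun n => Ultraproduct ℱ R fun α => ModQuot R n (M α) →ₗ[R] ModQuot R n (N α))
    fun n => ultraMap ℱ R fun _ => homTrans R n

variable (R M N) in
/-- The natural map from the limit of the ultraproducts of the `Hom`s to the `Hom` of the patching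
modules, acting on the `n`-th level through `ultraHom`. -/
def homLimitToPatchHom : HomLimit R ℱ M N →ₗ[R] PatchS R ℱ M →ₗ[R] PatchS R ℱ N where
  toFun φ :=
    { toFun := fun x => ⟨fun n => ultraHom ℱ (φ.1 n) (x.1 n), fun n => by
        rw [← ultraHom_upTrans, x.2 n, φ.2 n]⟩
      map_add' := fun x y => Subtype.ext (funext fun n => map_add _ (x.1 n) (y.1 n))
      map_smul' := fun c x => Subtype.ext (funext fun n => map_smul _ c (x.1 n)) }
  map_add' φ ψ := LinearMap.ext fun x => Subtype.ext (funext fun n =>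
    LinearMap.congr_fun (map_add (ultraHom ℱ) (φ.1 n) (ψ.1 n)) (x.1 n))
  map_smul' c φ := LinearMap.ext fun x => Subtype.ext (funext fun n =>
    LinearMap.congr_fun (map_smul (ultraHom ℱ) c (φ.1 n)) (x.1 n))

lemma patchEval_comp_homLimitToPatchHom (φ : HomLimit R ℱ M N) (n : ℕ) :
    patchEval R ℱ N n ∘ₗ homLimitToPatchHom R ℱ M N φ =
      ultraHom ℱ (φ.1 n) ∘ₗ patchEval R ℱ M n := rfl

lemma homLimitToPatchHom_injective
    (hinj : ∀ n, Function.Injective (ultraHom ℱ (A := R) (M := fun α => ModQuot R n (M α))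
      (N := fun α => ModQuot R n (N α)))) :
    Function.Injective (homLimitToPatchHom R ℱ M N) := by
  intro φ ψ h
  refine Subtype.ext (funext fun n => hinj n ?_)
  refine (LinearMap.cancel_right (patchEval_surjective R ℱ M n)).1 ?_
  rw [← patchEval_comp_homLimitToPatchHom, h, patchEval_comp_homLimitToPatchHom]

lemma homLimitToPatchHom_surjective (hm : (maximalIdeal R).FG)
    (hbij : ∀ n, Function.Bijective (ultraHom ℱ (A := R) (M := fun α => ModQuot R n (M α))
      (N := fun α => ModQuot R n (N α)))) :
    Function.Surjective (homLimitToPatchHom R ℱ M N) := by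
  intro g
  choose h hh using exists_comp_patchEval_eq ℱ hm g
  choose φ hφ using fun n => (hbij n).2 (h n)
  have hφg (n : ℕ) (x : PatchS R ℱ M) : ultraHom ℱ (φ n) (x.1 n) = (g x).1 n :=
    hφ n ▸ LinearMap.congr_fun (hh n) x
  refine ⟨⟨φ, fun n => (hbij n).1 ?_⟩, ?_⟩
  · refine (LinearMap.cancel_right (patchEval_surjective R ℱ M n)).1 (LinearMap.ext fun x => ?_)
    calc ultraHom ℱ (ultraMap ℱ R (fun _ => homTrans R n) (φ (n + 1))) (x.1 n)
        = upTrans R ℱ N n (ultraHom ℱ (φ (n + 1)) (x.1 (n + 1))) := by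
          rw [← ultraHom_upTrans, x.2 n]
      _ = ultraHom ℱ (φ n) (x.1 n) := by rw [hφg, hφg, (g x).2 n]
  · exact LinearMap.ext fun x => Subtype.ext (funext fun n => hφg n x)

end PatchHom

theorem patch_hom_iso_general
    (R : Type*) [CommRing R] [IsLocalRing R] (hm : (maximalIdeal R).FG) [Finite (ResidueField R)]
    {X : Type*} (ℱ : Ultrafilter X)
    (M N : X → Type*) [∀ α, AddCommGroup (M α)] [∀ α, Module R (M α)]
    [∀ α, AddCommGroup (N α)] [∀ α, Module R (N α)]
    (s : ℕ) (hMbdd : ∀ α, ∃ f : (Fin s → R) →ₗ[R] M α, Function.Surjective f) :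
    Function.Bijective (homLimitToPatchHom R ℱ M N) := by
  choose f hf using hMbdd
  have hbij (n : ℕ) := ultraHom_modQuot_bijective ℱ (N := N) hm hf n
  exact ⟨homLimitToPatchHom_injective ℱ fun n => (hbij n).1,
    homLimitToPatchHom_surjective ℱ hm hbij⟩

/-- Let R be a complete Noetherian local ring with finite residue field and
ℱ a non-principal ultrafilter on an infinite set X.  For bounded families (M α), (N α) of
R-modules, the module of homomorphisms between the patching modules is isomorphic to the
inverse limit over n of the ultraproducts of the modules Hom(M α/𝔪ⁿ, N α/𝔪ⁿ). -/
theorem patch_hom_iso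
    (R : Type*) [CommRing R] [IsLocalRing R] [IsNoetherianRing R]
    [IsAdicComplete (IsLocalRing.maximalIdeal R) R] [Finite (IsLocalRing.ResidueField R)]
    {X : Type*} [Infinite X] (ℱ : Ultrafilter X) (hℱ : ∀ x : X, ℱ ≠ pure x)
    (M N : X → Type*) [∀ α, AddCommGroup (M α)] [∀ α, Module R (M α)]
    [∀ α, AddCommGroup (N α)] [∀ α, Module R (N α)]
    (s : ℕ) (hMbdd : ∀ α, ∃ f : (Fin s → R) →ₗ[R] M α, Function.Surjective f)
    (hNbdd : ∀ α, ∃ f : (Fin s → R) →ₗ[R] N α, Function.Surjective f) :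
    Nonempty ((↥(PatchS R ℱ M) →ₗ[R] ↥(PatchS R ℱ N)) ≃ₗ[R]
      ↥(seqLimit R
        (fun n => Ultraproduct ℱ R (fun α => ModQuot R n (M α) →ₗ[R] ModQuot R n (N α)))
        (fun n => ultraMap ℱ R (fun α => homTrans R n)))) :=
  have hbij := patch_hom_iso_general R (IsNoetherian.noetherian (maximalIdeal R)) ℱ M N s hMbdd
  ⟨(LinearEquiv.ofBijective _ hbij).symm⟩
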